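/- There is no injective unital ℂ-algebra homomorphism from the algebra F_∞ = ℂ[[X₁,X₂,…]] of formal power series in countably many commuting indeterminates with complex coefficients (i.e. MvPowerSeries ℕ ℂ) into the algebra F = ℂ[[X]] of formal power series in one indeterminate (i.e. PowerSeries ℂ). In particular there is neither an algebraic nor a topological embedding of F_∞ into F. -/

import Mathlib

/-- A ring homomorphism is finite if its target is generated by finitely many elements. -/
theorem finite_of_gens {A B : Type*} [CommRing A] [CommRing B] (ψ : A →+* B) (d : ℕ) (e : ℕ → B)
    (he : ∀ h : B, ∃ c : ℕ → A, h = ∑ r ∈ Finset.range d, e r * ψ (c r)) : ψ.Finite := by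
  classical
  let _ := ψ.toAlgebra
  refine ⟨⟨(Finset.range d).image e, ?_⟩⟩
  rw [eq_top_iff]
  intro h _
  obtain ⟨c, hc⟩ := he h
  rw [hc]
  refine Submodule.sum_mem _ fun r hr => ?_
  rw [mul_comm]
  exact Submodule.smul_mem _ (c r) (Submodule.subset_span (Finset.mem_image_of_mem _ hr))

open PowerSeries in
/-- A `ℂ`-algebra endomorphism of `ℂ⟦X⟧` sending `X` to a nonzero nonunit is finite. -/
theorem finite_of_map_X (ψ : PowerSeries ℂ →ₐ[ℂ] PowerSeries ℂ)
    (h0 : ψ X ≠ 0) (hX : (X : PowerSeries ℂ) ∣ ψ X) : ψ.toRingHom.Finite := by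
  obtain ⟨d, v, hv⟩ : ∃ (d : ℕ) (v : PowerSeries ℂ), ψ X * v = X ^ d := by
    refine ⟨(ψ X).order.toNat, ((Unit_of_divided_by_X_pow_order (ψ X))⁻¹).1, ?_⟩
    rw [Units.mul_inv_eq_iff_eq_mul, Unit_of_divided_by_X_pow_order_nonzero h0]
    exact X_pow_order_mul_divXPowOrder.symm
  have hstep : ∀ h : PowerSeries ℂ, ∃ h' : PowerSeries ℂ,
      h = ψ X * h' + ∑ r ∈ Finset.range d, X ^ r * C (coeff r h) := by
    intro h
    refine ⟨v * mk fun i => coeff (i + d) h, ?_⟩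
    rw [← mul_assoc, hv]
    conv_lhs => rw [eq_X_pow_mul_shift_add_trunc d h]
    congr 1
    ext n
    simp [coeff_trunc, coeff_X_pow_mul', coeff_C, Finset.sum_ite_eq, map_sum]
  choose S hS using hstep
  let c : ℕ → PowerSeries ℂ → PowerSeries ℂ := fun r h => mk fun n => coeff r (S^[n] h)
  have hc : ∀ r h, c r h = X * c r (S h) + C (coeff r h) := by
    intro r h
    conv_lhs => rw [eq_X_mul_shift_add_const (c r h)]
    simp [c]
  have hψC : ∀ a : ℂ, ψ (C a) = C a := fun a => ψ.commutes a
  let D : PowerSeries ℂ → PowerSeries ℂ :=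
    fun h => h - ∑ r ∈ Finset.range d, X ^ r * ψ (c r h)
  have hD : ∀ h, D h = ψ X * D (S h) := by
    intro h
    simp only [D]
    conv_lhs =>
      rw [Finset.sum_congr rfl fun r _ => by rw [hc r h, map_add, map_mul, hψC, mul_add]]
    rw [Finset.sum_add_distrib, mul_sub, Finset.mul_sum]
    conv_lhs => enter [1]; rw [hS h]
    have hcomm : ∑ r ∈ Finset.range d, X ^ r * (ψ X * ψ (c r (S h)))
        = ∑ r ∈ Finset.range d, ψ X * (X ^ r * ψ (c r (S h))) :=
      Finset.sum_congr rfl fun r _ => by ring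
    rw [hcomm]
    ring
  have hdvd : ∀ n h, (X : PowerSeries ℂ) ^ n ∣ D h := by
    intro n
    induction n with
    | zero => simp
    | succ n ih =>
      intro h
      rw [hD, pow_succ']
      exact mul_dvd_mul hX (ih _)
  have hD0 : ∀ h, D h = 0 := by
    intro h
    ext n
    exact X_pow_dvd_iff.mp (hdvd (n + 1) h) n n.lt_succ_self
  exact finite_of_gens ψ.toRingHom d (fun r => X ^ r) fun h =>
    ⟨fun r => c r h, sub_eq_zero.mp (hD0 h)⟩

/-- `X 1` is not integral over the power series in `X 0`. -/
theorem not_integral_aux (p : Polynomial (PowerSeries ℂ)) (hp : p.Monic)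
    (h : p.eval₂ (PowerSeries.substAlgHom (R := ℂ)
      (PowerSeries.HasSubst.X (S := ℂ) (0 : ℕ))).toRingHom
      (MvPowerSeries.X (1 : ℕ) : MvPowerSeries ℕ ℂ) = 0) : False := by
  rw [hp.as_sum] at h
  have h2 := congrArg (MvPowerSeries.coeff (Finsupp.single (1 : ℕ) p.natDegree)) h
  simp only [Polynomial.eval₂_add, Polynomial.eval₂_finsetSum, Polynomial.eval₂_mul,
    Polynomial.eval₂_C, Polynomial.eval₂_pow, Polynomial.eval₂_X, map_add, map_sum, map_zero] at h2
  rw [Finset.sum_eq_zero] at h2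
  · rw [MvPowerSeries.X_pow_eq, MvPowerSeries.coeff_monomial_same] at h2
    simp at h2
  · intro i hi
    have hi' := Finset.mem_range.mp hi
    have hs : Finsupp.single (1 : ℕ) p.natDegree
        = Finsupp.single 1 (p.natDegree - i) + Finsupp.single 1 i := by
      rw [← Finsupp.single_add, Nat.sub_add_cancel hi'.le]
    rw [hs, MvPowerSeries.X_pow_eq, MvPowerSeries.coeff_add_mul_monomial, mul_one]
    change MvPowerSeries.coeff _ (PowerSeries.substAlgHom _ _) = 0
    rw [PowerSeries.coe_substAlgHom, PowerSeries.coeff_subst_single, if_neg]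
    intro he
    have := DFunLike.congr_fun he 1
    simp at this
    omega

/-- **No embedding of `F_∞` into `F`.**
There is no injective unital `ℂ`-algebra homomorphism from the algebra
`F_∞ = ℂ[[X₁, X₂, …]] = MvPowerSeries ℕ ℂ` of formal power series in countably many
commuting indeterminates into the algebra `F = ℂ[[X]] = PowerSeries ℂ` of formal power
series in one indeterminate.  In particular there is neither an algebraic nor a
topological embedding of `F_∞` into `F`. -/
theorem no_embedding_Finfty_into_F :
    ¬ ∃ f : MvPowerSeries ℕ ℂ →ₐ[ℂ] PowerSeries ℂ, Function.Injective f := by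
  rintro ⟨φ, hφ⟩
  let ι := PowerSeries.substAlgHom (R := ℂ) (PowerSeries.HasSubst.X (S := ℂ) (0 : ℕ))
  have hιX : ι PowerSeries.X = MvPowerSeries.X 0 := PowerSeries.substAlgHom_X _
  have hfin := finite_of_map_X (φ.comp ι) ?_ ?_
  · obtain ⟨p, hp, hp0⟩ := hfin.to_isIntegral (φ (MvPowerSeries.X 1))
    refine not_integral_aux p hp (hφ ?_)
    rw [map_zero, ← hp0]
    exact Polynomial.hom_eval₂ p ι.toRingHom φ.toRingHom (MvPowerSeries.X 1)
  · rw [AlgHom.comp_apply, hιX, map_ne_zero_iff φ hφ]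
    intro hz
    have := congrArg (MvPowerSeries.coeff (Finsupp.single (0 : ℕ) 1)) hz
    simp at this
  · rw [AlgHom.comp_apply, hιX, PowerSeries.X_dvd_iff]
    by_contra hne
    set a := PowerSeries.constantCoeff (φ (MvPowerSeries.X 0)) with ha
    have hu : IsUnit (MvPowerSeries.X 0 - algebraMap ℂ (MvPowerSeries ℕ ℂ) a) := by
      rw [MvPowerSeries.isUnit_iff_constantCoeff]
      simp [MvPowerSeries.algebraMap_apply, hne]
    have hu2 := (hu.map φ).map (PowerSeries.constantCoeff (R := ℂ))
    rw [map_sub, AlgHom.commutes, map_sub, ← ha] at hu2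
    simp [PowerSeries.algebraMap_apply] at hu2
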